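/- Let n ≥ 2, −∞ < μ < 1/4 and p > p_c := 1 + 2/(n−2+α₊). Then there is no positive classical solution u of Δu + (μ/x₁²)u = u^p on ℝⁿ₊ satisfying, for some c > 0, c⁻¹ x₁^{α₊} |x|^{−α₊−2/(p−1)} ≤ u(x) ≤ c x₁^{α₊} |x|^{−α₊−2/(p−1)} for all x ∈ ℝⁿ₊. -/

import Mathlib

open Real Set

noncomputable def lap {n : ℕ} (u : EuclideanSpace ℝ (Fin n) → ℝ)
    (x : EuclideanSpace ℝ (Fin n)) : ℝ :=
  ∑ i : Fin n, iteratedFDeriv ℝ 2 u x ![EuclideanSpace.single i 1, EuclideanSpace.single i 1]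

noncomputable def x1 {n : ℕ} (x : EuclideanSpace ℝ (Fin n)) : ℝ :=
  if h : 0 < n then x ⟨0, h⟩ else 0

def halfSpace (n : ℕ) : Set (EuclideanSpace ℝ (Fin n)) := {x | 0 < x1 x}

noncomputable def aPlus (μ : ℝ) : ℝ := 1 / 2 + Real.sqrt (1 / 4 - μ)

noncomputable def aMinus (μ : ℝ) : ℝ := 1 / 2 - Real.sqrt (1 / 4 - μ)

noncomputable def Lam (n : ℕ) (s : ℝ) : ℝ := s * (s + n - 2)

/-!
Write `t = x₁` and `L = Δ + μ / t²`. The functions `t ^ α₊` and `t ^ α₊ * ‖x‖ ^ (-(n - 2 + 2α₊))`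
solve `L w = 0`, while `L (t ^ (1 / 2)) = (μ - 1 / 4) * t ^ (-3 / 2) < 0`, so their sum `w` is a
positive strict supersolution. If `u ≤ c * t ^ α₊ * ‖x‖ ^ (-β)` with `0 < β < n - 2 + 2α₊`, then
`u / w` tends to `0` at the boundary and at infinity. If moreover `L u ≥ 0` and `u` is positive
somewhere, then `u / w` has a positive interior maximum `M`, so `u - M w` has an interior maximum
at which `L (u - M w) > 0`, against the second derivative test; hence `u ≤ 0`. A solution of
`L u = u ^ p` with the stated upper bound is the case `β = α₊ + 2 / (p - 1)`, and `p > p_c` says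
exactly that `β < n - 2 + 2α₊`.
-/

open Filter Topology Laplacian Gradient RealInnerProductSpace

section LocalMax

theorem deriv_deriv_nonpos_of_isLocalMax {f : ℝ → ℝ} {t : ℝ} (hmax : IsLocalMax f t)
    (hf : ContinuousAt f t) : deriv (deriv f) t ≤ 0 := by
  by_contra! hpos
  have hmin : IsLocalMin f t := isLocalMin_of_deriv_deriv_pos hpos hmax.deriv_eq_zero hf
  have hconst : f =ᶠ[𝓝 t] fun _ => f t := by
    filter_upwards [hmax, hmin] with s hle hge using le_antisymm hle hge
  have hzero : deriv (deriv f) t = 0 := by simp [hconst.deriv.deriv_eq]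
  exact hpos.ne' hzero

variable {E F : Type*} [NormedAddCommGroup E] [NormedSpace ℝ E]
  [NormedAddCommGroup F] [NormedSpace ℝ F]

theorem deriv_deriv_comp_line {f : E → F} {x : E} (hf : ContDiffAt ℝ 2 f x) (v : E) :
    deriv (deriv fun t : ℝ => f (x + t • v)) 0 = fderiv ℝ (fderiv ℝ f) x v v := by
  have hline (t : ℝ) : HasDerivAt (fun t : ℝ => x + t • v) v t := by
    simpa using ((hasDerivAt_id t).smul_const v).const_add x
  have hline_zero : Tendsto (fun t : ℝ => x + t • v) (𝓝 0) (𝓝 x) := by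
    simpa using (hline 0).continuousAt.tendsto
  have hfirst : deriv (fun t : ℝ => f (x + t • v)) =ᶠ[𝓝 0] fun t => fderiv ℝ f (x + t • v) v := by
    filter_upwards [hline_zero.eventually (hf.eventually (by simp))] with t ht
    exact ((ht.differentiableAt (by simp)).hasFDerivAt.comp_hasDerivAt t (hline t)).deriv
  have hsecond : HasFDerivAt (fderiv ℝ f) (fderiv ℝ (fderiv ℝ f) x) (x + (0 : ℝ) • v) := by
    simpa using ((hf.fderiv_right (m := 1) (by norm_num)).differentiableAt (by simp)).hasFDerivAt
  have hderiv : HasDerivAt (fun t : ℝ => fderiv ℝ f (x + t • v)) (fderiv ℝ (fderiv ℝ f) x v) 0 :=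
    hsecond.comp_hasDerivAt 0 (hline 0)
  rw [hfirst.deriv_eq]
  exact (((ContinuousLinearMap.apply ℝ F v).hasFDerivAt).comp_hasDerivAt 0 hderiv).deriv

theorem fderiv_fderiv_nonpos_of_isLocalMax {f : E → ℝ} {x : E} (hmax : IsLocalMax f x)
    (hf : ContDiffAt ℝ 2 f x) (v : E) : fderiv ℝ (fderiv ℝ f) x v v ≤ 0 := by
  have hline : ContinuousAt (fun t : ℝ => x + t • v) 0 := by fun_prop
  have hbase : x + (0 : ℝ) • v = x := by simp
  rw [← deriv_deriv_comp_line hf v]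
  refine deriv_deriv_nonpos_of_isLocalMax ?_ (hf.continuousAt.comp_of_eq hline hbase)
  exact IsMaxFilter.comp_tendsto (by rwa [hbase]) hline.tendsto

end LocalMax

theorem rpow_eq_sq_rpow_half {r : ℝ} (hr : 0 ≤ r) (s : ℝ) : r ^ s = (r ^ 2) ^ (s / 2) := by
  rw [← Real.rpow_natCast_mul hr]
  congr 1
  push_cast
  ring

section InnerProductSpace

variable {E : Type*} [NormedAddCommGroup E] [InnerProductSpace ℝ E] {v x : E}

theorem ne_zero_of_inner_pos (hx : 0 < ⟪v, x⟫) : x ≠ 0 := by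
  rintro rfl
  simp at hx

theorem contDiffAt_inner_rpow (hx : ⟪v, x⟫ ≠ 0) (a : ℝ) :
    ContDiffAt ℝ 2 (fun y => ⟪v, y⟫ ^ a) x :=
  (innerSL ℝ v).contDiff.contDiffAt.rpow_const_of_ne hx

theorem contDiffAt_norm_rpow (hx : x ≠ 0) (s : ℝ) : ContDiffAt ℝ 2 (fun y : E => ‖y‖ ^ s) x :=
  (contDiffAt_norm ℝ hx).rpow_const_of_ne (norm_ne_zero_iff.2 hx)

end InnerProductSpace

section Gradient

variable {E : Type*} [NormedAddCommGroup E] [InnerProductSpace ℝ E] [CompleteSpace E]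
  {f : E → ℝ} {v x : E}

theorem sum_fderiv_mul_fderiv {ι : Type*} [Fintype ι] (b : OrthonormalBasis ι ℝ E)
    (f g : E → ℝ) (x : E) :
    ∑ i, fderiv ℝ f x (b i) * fderiv ℝ g x (b i) = ⟪∇ f x, ∇ g x⟫ := by
  rw [← b.sum_inner_mul_inner]
  simp [inner_gradient_left, inner_gradient_right]

theorem gradient_rpow_const (hf : DifferentiableAt ℝ f x) (hx : f x ≠ 0) (r : ℝ) :
    ∇ (fun y => f y ^ r) x = (r * f x ^ (r - 1)) • ∇ f x := by
  refine HasGradientAt.gradient ?_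
  rw [hasGradientAt_iff_hasFDerivAt, map_smul, toDual_gradient]
  exact hf.hasFDerivAt.rpow_const (.inl hx)

theorem gradient_inner_right (v x : E) : ∇ (fun y => ⟪v, y⟫) x = v :=
  HasGradientAt.gradient (hasGradientAt_iff_hasFDerivAt.2 (innerSL ℝ v).hasFDerivAt)

theorem gradient_inner_rpow (hx : ⟪v, x⟫ ≠ 0) (a : ℝ) :
    ∇ (fun y => ⟪v, y⟫ ^ a) x = (a * ⟪v, x⟫ ^ (a - 1)) • v := by
  have hinner : DifferentiableAt ℝ (fun y => ⟪v, y⟫) x := (innerSL ℝ v).differentiableAt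
  rw [gradient_rpow_const hinner hx, gradient_inner_right]

theorem gradient_norm_sq (x : E) : ∇ (fun y : E => ‖y‖ ^ 2) x = (2 : ℝ) • x := by
  refine HasGradientAt.gradient (hasGradientAt_iff_hasFDerivAt.2 ?_)
  refine (hasStrictFDerivAt_norm_sq x).hasFDerivAt.congr_fderiv ?_
  ext w
  simp

theorem gradient_norm_rpow (hx : x ≠ 0) (s : ℝ) :
    ∇ (fun y : E => ‖y‖ ^ s) x = (s * ‖x‖ ^ (s - 2)) • x := by
  have hsq : DifferentiableAt ℝ (fun y : E => ‖y‖ ^ 2) x :=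
    (contDiff_norm_sq ℝ (n := 1)).contDiffAt.differentiableAt (by simp)
  simp_rw [rpow_eq_sq_rpow_half (norm_nonneg _)]
  rw [gradient_rpow_const hsq (by positivity), gradient_norm_sq, smul_smul]
  ring_nf

end Gradient

section Laplacian

variable {E : Type*} [NormedAddCommGroup E] [InnerProductSpace ℝ E] [FiniteDimensional ℝ E]
  {f g : E → ℝ} {v x : E}

theorem laplacian_eq_sum_fderiv_fderiv {ι : Type*} [Fintype ι] (b : OrthonormalBasis ι ℝ E)
    (f : E → ℝ) (x : E) : Δ f x = ∑ i, fderiv ℝ (fderiv ℝ f) x (b i) (b i) := by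
  simp [InnerProductSpace.laplacian_eq_iteratedFDeriv_orthonormalBasis f b,
    iteratedFDeriv_two_apply]

theorem laplacian_nonpos_of_isLocalMax (hmax : IsLocalMax f x) (hf : ContDiffAt ℝ 2 f x) :
    Δ f x ≤ 0 := by
  rw [laplacian_eq_sum_fderiv_fderiv (stdOrthonormalBasis ℝ E)]
  exact Finset.sum_nonpos fun i _ => fderiv_fderiv_nonpos_of_isLocalMax hmax hf _

theorem laplacian_mul (hf : ContDiffAt ℝ 2 f x) (hg : ContDiffAt ℝ 2 g x) :
    Δ (fun y => f y * g y) x = f x * Δ g x + 2 * ⟪∇ f x, ∇ g x⟫ + g x * Δ f x := by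
  have hfirst : fderiv ℝ (fun y => f y * g y) =ᶠ[𝓝 x]
      fun y => f y • fderiv ℝ g y + g y • fderiv ℝ f y := by
    filter_upwards [hf.eventually (by simp), hg.eventually (by simp)] with y hfy hgy
    exact fderiv_fun_mul (hfy.differentiableAt (by simp)) (hgy.differentiableAt (by simp))
  have hf₁ : DifferentiableAt ℝ f x := hf.differentiableAt (by simp)
  have hg₁ : DifferentiableAt ℝ g x := hg.differentiableAt (by simp)
  have hf₂ : DifferentiableAt ℝ (fderiv ℝ f) x :=
    (hf.fderiv_right (m := 1) (by norm_num)).differentiableAt (by simp)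
  have hg₂ : DifferentiableAt ℝ (fderiv ℝ g) x :=
    (hg.fderiv_right (m := 1) (by norm_num)).differentiableAt (by simp)
  have hsecond (w : E) : fderiv ℝ (fderiv ℝ fun y => f y * g y) x w w =
      f x * fderiv ℝ (fderiv ℝ g) x w w + 2 * (fderiv ℝ f x w * fderiv ℝ g x w) +
        g x * fderiv ℝ (fderiv ℝ f) x w w := by
    rw [hfirst.fderiv_eq, fderiv_fun_add (hf₁.fun_smul hg₂) (hg₁.fun_smul hf₂),
      fderiv_fun_smul hf₁ hg₂, fderiv_fun_smul hg₁ hf₂]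
    simp only [add_apply, smul_apply, ContinuousLinearMap.smulRight_apply, smul_eq_mul]
    ring
  simp only [laplacian_eq_sum_fderiv_fderiv (stdOrthonormalBasis ℝ E), hsecond,
    Finset.sum_add_distrib, ← Finset.mul_sum, sum_fderiv_mul_fderiv]

theorem laplacian_rpow_const (hf : ContDiffAt ℝ 2 f x) (hx : f x ≠ 0) (r : ℝ) :
    Δ (fun y => f y ^ r) x =
      r * (r - 1) * f x ^ (r - 2) * ‖∇ f x‖ ^ 2 + r * f x ^ (r - 1) * Δ f x := by
  have hfirst : fderiv ℝ (fun y => f y ^ r) =ᶠ[𝓝 x]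
      fun y => (r * f y ^ (r - 1)) • fderiv ℝ f y := by
    filter_upwards [hf.eventually (by simp), hf.continuousAt.eventually_ne hx] with y hfy hy
    exact ((hfy.differentiableAt (by simp)).hasFDerivAt.rpow_const (.inl hy)).fderiv
  have hf₁ : DifferentiableAt ℝ f x := hf.differentiableAt (by simp)
  have hf₂ : DifferentiableAt ℝ (fderiv ℝ f) x :=
    (hf.fderiv_right (m := 1) (by norm_num)).differentiableAt (by simp)
  have hcoeff : HasFDerivAt (fun y => r * f y ^ (r - 1))
      (r • ((r - 1) * f x ^ (r - 2)) • fderiv ℝ f x) x := by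
    have := (hf₁.hasFDerivAt.rpow_const (p := r - 1) (.inl hx)).const_mul r
    rwa [show r - 1 - 1 = r - 2 by ring] at this
  have hsecond (w : E) : fderiv ℝ (fderiv ℝ fun y => f y ^ r) x w w =
      r * (r - 1) * f x ^ (r - 2) * (fderiv ℝ f x w * fderiv ℝ f x w) +
        r * f x ^ (r - 1) * fderiv ℝ (fderiv ℝ f) x w w := by
    rw [hfirst.fderiv_eq, (hcoeff.fun_smul hf₂.hasFDerivAt).fderiv]
    simp only [add_apply, smul_apply, ContinuousLinearMap.smulRight_apply, smul_eq_mul]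
    ring
  simp only [laplacian_eq_sum_fderiv_fderiv (stdOrthonormalBasis ℝ E), hsecond,
    Finset.sum_add_distrib, ← Finset.mul_sum, sum_fderiv_mul_fderiv, real_inner_self_eq_norm_sq]

theorem laplacian_inner_right (v x : E) : Δ (fun y => ⟪v, y⟫) x = 0 := by
  have hfirst : fderiv ℝ (fun y => ⟪v, y⟫) = fun _ => innerSL ℝ v :=
    funext fun y => (innerSL ℝ v).fderiv
  simp [laplacian_eq_sum_fderiv_fderiv (stdOrthonormalBasis ℝ E), hfirst]

theorem laplacian_inner_rpow (hx : ⟪v, x⟫ ≠ 0) (a : ℝ) :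
    Δ (fun y => ⟪v, y⟫ ^ a) x = a * (a - 1) * ‖v‖ ^ 2 * ⟪v, x⟫ ^ (a - 2) := by
  have hinner : ContDiffAt ℝ 2 (fun y => ⟪v, y⟫) x := (innerSL ℝ v).contDiff.contDiffAt
  rw [laplacian_rpow_const hinner hx, gradient_inner_right, laplacian_inner_right]
  ring

theorem laplacian_norm_sq (x : E) : Δ (fun y : E => ‖y‖ ^ 2) x = 2 * Module.finrank ℝ E := by
  have hsecond (w : E) : fderiv ℝ (fderiv ℝ fun y : E => ‖y‖ ^ 2) x w w = 2 * ‖w‖ ^ 2 := by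
    rw [fderiv_norm_sq, fderiv_const_smul (innerSL ℝ (E := E)).differentiableAt,
      (innerSL ℝ (E := E)).fderiv]
    simp only [smul_apply, nsmul_eq_mul, Nat.cast_ofNat]
    exact congrArg (2 * ·) (real_inner_self_eq_norm_sq w)
  simp [laplacian_eq_sum_fderiv_fderiv (stdOrthonormalBasis ℝ E), hsecond, mul_comm]

theorem laplacian_norm_rpow (hx : x ≠ 0) (s : ℝ) :
    Δ (fun y : E => ‖y‖ ^ s) x = s * (s + Module.finrank ℝ E - 2) * ‖x‖ ^ (s - 2) := by
  have hq : ‖x‖ ^ 2 ≠ 0 := by positivity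
  simp_rw [rpow_eq_sq_rpow_half (norm_nonneg _)]
  rw [laplacian_rpow_const (contDiff_norm_sq ℝ).contDiffAt hq, gradient_norm_sq, laplacian_norm_sq,
    norm_smul, mul_pow, show s / 2 - 2 = (s - 2) / 2 - 1 by ring,
    show s / 2 - 1 = (s - 2) / 2 by ring, Real.rpow_sub_one hq, Real.norm_ofNat]
  field_simp
  ring

theorem laplacian_inner_rpow_mul_norm_rpow (hx : 0 < ⟪v, x⟫) (a s : ℝ) :
    Δ (fun y => ⟪v, y⟫ ^ a * ‖y‖ ^ s) x =
      (a * (a - 1) * ‖v‖ ^ 2 / ⟪v, x⟫ ^ 2 + s * (s + 2 * a + Module.finrank ℝ E - 2) / ‖x‖ ^ 2) *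
        (⟪v, x⟫ ^ a * ‖x‖ ^ s) := by
  have hx₀ : x ≠ 0 := ne_zero_of_inner_pos hx
  have hr : 0 < ‖x‖ := norm_pos_iff.2 hx₀
  rw [laplacian_mul (contDiffAt_inner_rpow hx.ne' a) (contDiffAt_norm_rpow hx₀ s),
    laplacian_inner_rpow hx.ne', laplacian_norm_rpow hx₀, gradient_inner_rpow hx.ne',
    gradient_norm_rpow hx₀, real_inner_smul_left, real_inner_smul_right,
    Real.rpow_sub_one hx.ne', Real.rpow_sub hx, Real.rpow_sub hr, Real.rpow_two, Real.rpow_two]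
  field_simp
  ring

end Laplacian

section MaximumPrinciple

theorem exists_touching_of_pos {X : Type*} [TopologicalSpace X] {Ω : Set X} {u w : X → ℝ} {x₀ : X}
    (hu : ContinuousOn u Ω) (hw : ContinuousOn w Ω) (hw_pos : ∀ x ∈ Ω, 0 < w x)
    (hsmall : ∀ m > 0, ∃ K ⊆ Ω, IsCompact K ∧ ∀ x ∈ Ω \ K, u x < m * w x)
    (hx₀ : x₀ ∈ Ω) (hpos : 0 < u x₀) :
    ∃ M > 0, ∃ x ∈ Ω, u x = M * w x ∧ ∀ y ∈ Ω, u y ≤ M * w y := by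
  have hm : 0 < u x₀ / w x₀ := div_pos hpos (hw_pos x₀ hx₀)
  obtain ⟨K, hKΩ, hK, hout⟩ := hsmall (u x₀ / w x₀) hm
  have hx₀K : x₀ ∈ K := by
    by_contra hx₀K
    have := hout x₀ ⟨hx₀, hx₀K⟩
    rw [div_mul_cancel₀ _ (hw_pos x₀ hx₀).ne'] at this
    exact this.false
  have hratio : ContinuousOn (fun x => u x / w x) K :=
    (hu.mono hKΩ).div (hw.mono hKΩ) fun x hx => (hw_pos x (hKΩ hx)).ne'
  obtain ⟨x, hxK, hmax⟩ := hK.exists_isMaxOn ⟨x₀, hx₀K⟩ hratio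
  have hle : u x₀ / w x₀ ≤ u x / w x := hmax hx₀K
  refine ⟨u x / w x, hm.trans_le hle, x, hKΩ hxK,
    (div_mul_cancel₀ _ (hw_pos x (hKΩ hxK)).ne').symm, fun y hy => ?_⟩
  by_cases hyK : y ∈ K
  · exact (div_le_iff₀ (hw_pos y hy)).1 (hmax hyK)
  · exact (hout y ⟨hy, hyK⟩).le.trans (mul_le_mul_of_nonneg_right hle (hw_pos y hy).le)

variable {E : Type*} [NormedAddCommGroup E] [InnerProductSpace ℝ E] [FiniteDimensional ℝ E]

theorem nonpos_of_strict_supersolution {Ω : Set E} (hΩ : IsOpen Ω) {V u w : E → ℝ}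
    (hu : ContDiffOn ℝ 2 u Ω) (hw : ContDiffOn ℝ 2 w Ω) (hw_pos : ∀ x ∈ Ω, 0 < w x)
    (hLu : ∀ x ∈ Ω, 0 ≤ Δ u x + V x * u x) (hLw : ∀ x ∈ Ω, Δ w x + V x * w x < 0)
    (hsmall : ∀ m > 0, ∃ K ⊆ Ω, IsCompact K ∧ ∀ x ∈ Ω \ K, u x < m * w x) :
    ∀ x ∈ Ω, u x ≤ 0 := by
  intro x₀ hx₀
  by_contra! hpos
  obtain ⟨M, hM, x, hx, htouch, hle⟩ :=
    exists_touching_of_pos hu.continuousOn hw.continuousOn hw_pos hsmall hx₀ hpos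
  have hux : ContDiffAt ℝ 2 u x := hu.contDiffAt (hΩ.mem_nhds hx)
  have hwx : ContDiffAt ℝ 2 w x := hw.contDiffAt (hΩ.mem_nhds hx)
  have hMwx : ContDiffAt ℝ 2 (M • w) x := hwx.const_smul M
  have hmax : IsLocalMax (u - M • w) x := by
    filter_upwards [hΩ.mem_nhds hx] with y hy
    simpa [htouch] using hle y hy
  have hΔ : Δ u x - M * Δ w x ≤ 0 := by
    have := laplacian_nonpos_of_isLocalMax hmax (hux.sub hMwx)
    rwa [hux.laplacian_sub hMwx, InnerProductSpace.laplacian_smul M hwx,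
      smul_eq_mul] at this
  have hLux : 0 ≤ Δ u x + M * (V x * w x) := by
    convert hLu x hx using 2
    rw [htouch]
    ring
  have hLwx : M * (Δ w x + V x * w x) < 0 := mul_neg_of_pos_of_neg hM (hLw x hx)
  linarith

end MaximumPrinciple

section PowerBounds

theorem exists_forall_lt_mul_rpow_lt (C : ℝ) {m γ : ℝ} (hm : 0 < m) (hγ : 0 < γ) :
    ∃ δ > 0, ∀ r, 0 < r → r < δ → C * r ^ γ < m := by
  have hlim : Tendsto (fun r : ℝ => C * r ^ γ) (𝓝 0) (𝓝 0) := by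
    simpa [Real.zero_rpow hγ.ne'] using
      (Real.continuousAt_rpow_const 0 γ (.inr hγ.le)).tendsto.const_mul C
  obtain ⟨δ, hδ, hball⟩ := Metric.eventually_nhds_iff.1 (hlim.eventually (gt_mem_nhds hm))
  refine ⟨δ, hδ, fun r hr hrδ => hball ?_⟩
  rwa [Real.dist_0_eq_abs, abs_of_pos hr]

theorem exists_forall_gt_mul_rpow_neg_lt (C : ℝ) {m γ : ℝ} (hm : 0 < m) (hγ : 0 < γ) :
    ∃ R, ∀ r > R, C * r ^ (-γ) < m := by
  have hlim : Tendsto (fun r : ℝ => C * r ^ (-γ)) atTop (𝓝 0) := by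
    simpa using (tendsto_rpow_neg_atTop hγ).const_mul C
  obtain ⟨R, hR⟩ := eventually_atTop.1 (hlim.eventually (gt_mem_nhds hm))
  exact ⟨R, fun r hr => hR r hr.le⟩

theorem exists_mul_rpow_mul_rpow_neg_lt {a b β σ m : ℝ} (c : ℝ) (hab : b < a) (hβ : 0 < β)
    (hβσ : β < σ) (hm : 0 < m) :
    ∃ δ > 0, ∃ R, ∀ t r, 0 < t → 0 < r → t < δ ∨ R < r →
      c * t ^ a * r ^ (-β) < m * (t ^ a + t ^ a * r ^ (-σ) + t ^ b) := by
  obtain ⟨R, hR⟩ := exists_forall_gt_mul_rpow_neg_lt c hm hβ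
  obtain ⟨ρ, hρ, hρr⟩ := exists_forall_lt_mul_rpow_lt c hm (sub_pos.2 hβσ)
  obtain ⟨δ, hδ, hδt⟩ := exists_forall_lt_mul_rpow_lt (|c| * ρ ^ (-β)) hm (sub_pos.2 hab)
  refine ⟨δ, hδ, R, fun t r ht hr htr => ?_⟩
  suffices c * t ^ a * r ^ (-β) < m * t ^ a ∨ c * t ^ a * r ^ (-β) < m * (t ^ a * r ^ (-σ)) ∨
      c * t ^ a * r ^ (-β) < m * t ^ b by
    have h₁ : 0 < m * t ^ a := by positivity
    have h₂ : 0 < m * (t ^ a * r ^ (-σ)) := by positivity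
    have h₃ : 0 < m * t ^ b := by positivity
    rcases this with h | h | h <;> linarith
  rcases lt_or_ge R r with hRr | hrR
  · left
    calc c * t ^ a * r ^ (-β) = c * r ^ (-β) * t ^ a := by ring
      _ < m * t ^ a := by gcongr; exact hR r hRr
  rcases lt_or_ge r ρ with hrρ | hρr'
  · right; left
    calc c * t ^ a * r ^ (-β) = c * r ^ (σ - β) * (t ^ a * r ^ (-σ)) := by
          rw [show -β = σ - β + -σ by ring, Real.rpow_add hr]
          ring
      _ < m * (t ^ a * r ^ (-σ)) := by gcongr; exact hρr r hr hrρ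
  · right; right
    calc c * t ^ a * r ^ (-β) = c * r ^ (-β) * t ^ a := by ring
      _ ≤ |c| * ρ ^ (-β) * t ^ a := by
          gcongr ?_ * _
          have hanti := Real.rpow_le_rpow_of_nonpos hρ hρr' (neg_nonpos.2 hβ.le)
          exact mul_le_mul (le_abs_self c) hanti (by positivity) (abs_nonneg c)
      _ = |c| * ρ ^ (-β) * t ^ (a - b) * t ^ b := by
          rw [mul_assoc _ (t ^ (a - b)), ← Real.rpow_add ht, sub_add_cancel]
      _ < m * t ^ b := by gcongr; exact hδt t ht (htr.resolve_right hrR.not_gt)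

end PowerBounds

section Barrier

variable {E : Type*} [NormedAddCommGroup E] [InnerProductSpace ℝ E] {v x : E} {μ : ℝ}

theorem aPlus_mul_aPlus_sub_one (hμ : μ ≤ 1 / 4) : aPlus μ * (aPlus μ - 1) = -μ := by
  have hsqrt : √(1 / 4 - μ) ^ 2 = 1 / 4 - μ := Real.sq_sqrt (by linarith)
  rw [aPlus]
  linear_combination hsqrt

theorem half_lt_aPlus (hμ : μ < 1 / 4) : 1 / 2 < aPlus μ := by
  rw [aPlus]
  linarith [Real.sqrt_pos.2 (sub_pos.2 hμ)]

/-- A positive strict supersolution of the Hardy operator `Δ + μ / ⟪v, ·⟫²` on the half-space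
`{y | 0 < ⟪v, y⟫}`, the comparison function for the maximum principle. The first summand is a
solution, dominating at infinity; the second is its Kelvin transform, dominating at the origin;
the third makes the supersolution strict and dominates on the rest of the boundary. -/
noncomputable def barrier (v : E) (μ : ℝ) (x : E) : ℝ :=
  ⟪v, x⟫ ^ aPlus μ + ⟪v, x⟫ ^ aPlus μ * ‖x‖ ^ (-(Module.finrank ℝ E - 2 + 2 * aPlus μ)) +
    ⟪v, x⟫ ^ (1 / 2 : ℝ)

theorem barrier_pos (hx : 0 < ⟪v, x⟫) : 0 < barrier v μ x := by
  have hr : 0 < ‖x‖ := norm_pos_iff.2 (ne_zero_of_inner_pos hx)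
  rw [barrier]
  positivity

theorem contDiffOn_barrier : ContDiffOn ℝ 2 (barrier v μ) {y | 0 < ⟪v, y⟫} := fun _ hx =>
  (((contDiffAt_inner_rpow (ne_of_gt hx) _).add ((contDiffAt_inner_rpow (ne_of_gt hx) _).mul
    (contDiffAt_norm_rpow (ne_zero_of_inner_pos hx) _))).add
    (contDiffAt_inner_rpow (ne_of_gt hx) _)).contDiffWithinAt

variable [FiniteDimensional ℝ E]

theorem laplacian_barrier_add_hardy_neg (hv : ‖v‖ = 1) (hμ : μ < 1 / 4) (hx : 0 < ⟪v, x⟫) :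
    Δ (barrier v μ) x + μ / ⟪v, x⟫ ^ 2 * barrier v μ x < 0 := by
  set a := aPlus μ
  set s : ℝ := -(Module.finrank ℝ E - 2 + 2 * a) with hs
  have hroot : a * (a - 1) = -μ := aPlus_mul_aPlus_sub_one hμ.le
  have hlinear (b : ℝ) :
      Δ (fun y => ⟪v, y⟫ ^ b) x = b * (b - 1) / ⟪v, x⟫ ^ 2 * ⟪v, x⟫ ^ b := by
    simpa [hv] using laplacian_inner_rpow_mul_norm_rpow hx b 0
  have hkelvin : Δ (fun y => ⟪v, y⟫ ^ a * ‖y‖ ^ s) x =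
      -μ / ⟪v, x⟫ ^ 2 * (⟪v, x⟫ ^ a * ‖x‖ ^ s) := by
    rw [laplacian_inner_rpow_mul_norm_rpow hx, hroot, hv, hs]
    ring
  have hsum : Δ (barrier v μ) x = Δ (fun y => ⟪v, y⟫ ^ a) x +
      Δ (fun y => ⟪v, y⟫ ^ a * ‖y‖ ^ s) x + Δ (fun y => ⟪v, y⟫ ^ (1 / 2 : ℝ)) x := by
    have hpow (b : ℝ) := contDiffAt_inner_rpow hx.ne' b
    have hmul : ContDiffAt ℝ 2 (fun y => ⟪v, y⟫ ^ a * ‖y‖ ^ s) x :=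
      (hpow a).mul (contDiffAt_norm_rpow (ne_zero_of_inner_pos hx) s)
    exact (((hpow a).add hmul).laplacian_add (hpow (1 / 2))).trans
      (congrArg (· + _) ((hpow a).laplacian_add hmul))
  calc Δ (barrier v μ) x + μ / ⟪v, x⟫ ^ 2 * barrier v μ x
      = (μ - 1 / 4) * (⟪v, x⟫ ^ (1 / 2 : ℝ) / ⟪v, x⟫ ^ 2) := by
        rw [hsum, hlinear, hkelvin, hlinear, hroot, barrier]
        ring
    _ < 0 := mul_neg_of_neg_of_pos (by linarith) (by positivity)

theorem exists_isCompact_mul_rpow_lt_barrier {β m : ℝ} (v : E) (hμ : μ < 1 / 4) (hβ : 0 < β)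
    (hβ' : β < Module.finrank ℝ E - 2 + 2 * aPlus μ) (c : ℝ) (hm : 0 < m) :
    ∃ K ⊆ {y : E | 0 < ⟪v, y⟫}, IsCompact K ∧ ∀ x ∈ {y : E | 0 < ⟪v, y⟫} \ K,
      c * ⟪v, x⟫ ^ aPlus μ * ‖x‖ ^ (-β) < m * barrier v μ x := by
  obtain ⟨δ, hδ, R, hlt⟩ := exists_mul_rpow_mul_rpow_neg_lt c (half_lt_aPlus hμ) hβ hβ' hm
  refine ⟨Metric.closedBall 0 R ∩ {y | δ ≤ ⟪v, y⟫}, fun x hx => hδ.trans_le hx.2,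
    (isCompact_closedBall 0 R).inter_right (isClosed_le (by fun_prop) (by fun_prop)), ?_⟩
  rintro x ⟨hx, hxK⟩
  refine hlt _ _ hx (norm_pos_iff.2 (ne_zero_of_inner_pos hx)) ?_
  contrapose! hxK
  exact ⟨mem_closedBall_zero_iff.2 hxK.2, hxK.1⟩

end Barrier

theorem stmt2_general {E : Type*} [NormedAddCommGroup E] [InnerProductSpace ℝ E]
    [FiniteDimensional ℝ E] {v : E} (hv : ‖v‖ = 1) {μ β c : ℝ} (hμ : μ < 1 / 4) (hβ : 0 < β)
    (hβ' : β < Module.finrank ℝ E - 2 + 2 * aPlus μ) {u : E → ℝ}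
    (hu : ContDiffOn ℝ 2 u {x | 0 < ⟪v, x⟫})
    (hsub : ∀ x, 0 < ⟪v, x⟫ → 0 ≤ Δ u x + μ / ⟪v, x⟫ ^ 2 * u x)
    (hle : ∀ x, 0 < ⟪v, x⟫ → u x ≤ c * ⟪v, x⟫ ^ aPlus μ * ‖x‖ ^ (-β)) :
    ∀ x, 0 < ⟪v, x⟫ → u x ≤ 0 := by
  have hopen : IsOpen {x : E | 0 < ⟪v, x⟫} := isOpen_lt (by fun_prop) (by fun_prop)
  refine nonpos_of_strict_supersolution hopen hu contDiffOn_barrier (fun _ => barrier_pos) hsub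
    (fun _ => laplacian_barrier_add_hardy_neg hv hμ) fun m hm => ?_
  obtain ⟨K, hK, hKc, hlt⟩ := exists_isCompact_mul_rpow_lt_barrier v hμ hβ hβ' c hm
  exact ⟨K, hK, hKc, fun x hx => (hle x hx.1).trans_lt (hlt x hx)⟩

theorem lap_eq_laplacian {n : ℕ} (u : EuclideanSpace ℝ (Fin n) → ℝ)
    (x : EuclideanSpace ℝ (Fin n)) : lap u x = Δ u x := by
  simp [lap, InnerProductSpace.laplacian_eq_iteratedFDeriv_orthonormalBasis u
    (EuclideanSpace.basisFun (Fin n) ℝ)]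

theorem x1_eq_inner_single {n : ℕ} [NeZero n] (x : EuclideanSpace ℝ (Fin n)) :
    x1 x = ⟪EuclideanSpace.single 0 1, x⟫ := by
  simp [x1, NeZero.pos n, EuclideanSpace.inner_single_left]

theorem aPlus_add_two_div_mem_Ioo {n : ℕ} {μ p : ℝ} (hn : 2 ≤ n) (hμ : μ < 1 / 4)
    (hpc : 1 + 2 / ((n : ℝ) - 2 + aPlus μ) < p) :
    aPlus μ + 2 / (p - 1) ∈ Ioo 0 ((n : ℝ) - 2 + 2 * aPlus μ) := by
  have ha : 1 / 2 < aPlus μ := half_lt_aPlus hμ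
  have hn' : (2 : ℝ) ≤ n := by exact_mod_cast hn
  have hd : 0 < (n : ℝ) - 2 + aPlus μ := by linarith
  have hp : 2 / ((n : ℝ) - 2 + aPlus μ) < p - 1 := by linarith
  have hp' : 0 < p - 1 := lt_trans (by positivity) hp
  have hlt : 2 / (p - 1) < (n : ℝ) - 2 + aPlus μ := (div_lt_comm₀ hd hp').1 hp
  have hpos : 0 < 2 / (p - 1) := by positivity
  constructor <;> linarith

/-- for `p > p_c` there is no positive classical solution of
`Δu + (μ/x₁²)u = u^p` on the half-space satisfying the two-sided bound
`c⁻¹ x₁^{α₊} |x|^{−α₊−2/(p−1)} ≤ u ≤ c x₁^{α₊} |x|^{−α₊−2/(p−1)}`. -/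
theorem stmt2 (n : ℕ) (hn : 2 ≤ n) (μ p : ℝ) (hμ : μ < 1 / 4)
    (hpc : 1 + 2 / ((n : ℝ) - 2 + aPlus μ) < p) :
    ¬ ∃ (u : EuclideanSpace ℝ (Fin n) → ℝ) (c : ℝ), 0 < c ∧
      ContDiffOn ℝ 2 u (halfSpace n) ∧
      (∀ x ∈ halfSpace n, 0 < u x) ∧
      (∀ x ∈ halfSpace n, lap u x + (μ / (x1 x) ^ 2) * u x = u x ^ p) ∧
      (∀ x ∈ halfSpace n,
        c⁻¹ * x1 x ^ aPlus μ * ‖x‖ ^ (-(aPlus μ) - 2 / (p - 1)) ≤ u x ∧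
        u x ≤ c * x1 x ^ aPlus μ * ‖x‖ ^ (-(aPlus μ) - 2 / (p - 1))) := by
  rintro ⟨u, c, -, hu, hpos, heq, hbound⟩
  have : NeZero n := ⟨by omega⟩
  let e : EuclideanSpace ℝ (Fin n) := EuclideanSpace.single 0 1
  obtain ⟨hβ, hβ'⟩ := aPlus_add_two_div_mem_Ioo hn hμ hpc
  have hhalf : halfSpace n = {x | 0 < ⟪e, x⟫} := by simp only [halfSpace, x1_eq_inner_single, e]
  simp only [hhalf, mem_ofPred_eq, lap_eq_laplacian, x1_eq_inner_single, ← neg_add'] at *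
  have he : 0 < ⟪e, e⟫ := by simp [e]
  refine (hpos e he).not_ge (stmt2_general (by simp [e]) hμ hβ (by simpa using hβ') hu
    (fun x hx => ?_) (fun x hx => (hbound x hx).2) e he)
  rw [heq x hx]
  exact Real.rpow_nonneg (hpos x hx).le p
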